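/- There is an absolute constant C > 0 with the following property. Let P and Q be disjoint finite sets of points in the Euclidean plane ℝ² with |P| = |Q| = n, and suppose that every line in the plane contains at most n points of P ∪ Q. Then the number of bichromatic induced lines of (P, Q) is at least C · n². -/

import Mathlib

open Set

noncomputable section

/-- The line through two points of the plane, as a set. -/
def lineThrough (p q : ℝ × ℝ) : Set (ℝ × ℝ) := (affineSpan ℝ {p, q} : AffineSubspace ℝ (ℝ × ℝ))

/-- A subset of the plane is a line if it is the affine span of two distinct points. -/
def IsLine (L : Set (ℝ × ℝ)) : Prop := ∃ p q : ℝ × ℝ, p ≠ q ∧ L = lineThrough p q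

/-- The richness of a line `L` with respect to a finite point set `S`:
the number of points of `S` incident on `L`. -/
def richness (S : Finset (ℝ × ℝ)) (L : Set (ℝ × ℝ)) : ℕ := ((S : Set (ℝ × ℝ)) ∩ L).ncard

/-- The lines induced by a finite point set `S`: lines passing through
at least two distinct points of `S`. -/
def InducedLines (S : Finset (ℝ × ℝ)) : Set (Set (ℝ × ℝ)) :=
  {L | IsLine L ∧ ∃ p ∈ S, ∃ q ∈ S, p ≠ q ∧ p ∈ L ∧ q ∈ L}

/-- The bichromatic induced lines of a bichromatic point set `(P, Q)`:
lines incident on at least one point of `P` and at least one point of `Q`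
(for disjoint `P`, `Q` such a line passes through two distinct points of `P ∪ Q`). -/
def BichromLines (P Q : Finset (ℝ × ℝ)) : Set (Set (ℝ × ℝ)) :=
  {L | IsLine L ∧ (∃ p ∈ P, p ∈ L) ∧ (∃ q ∈ Q, q ∈ L)}

abbrev BEdge := (ℝ × ℝ) × (ℝ × ℝ) × (ℝ × ℝ)

def ht (l : ℝ × ℝ) (x : ℝ) : ℝ := l.1 * x + l.2

structure GoodE (V : Finset (ℝ × ℝ)) (e : BEdge) : Prop where
  ha : e.2.1 ∈ V
  hb : e.2.2 ∈ V
  lt : e.2.1.1 < e.2.2.1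
  oa : e.2.1.2 = ht e.1 e.2.1.1
  ob : e.2.2.2 = ht e.1 e.2.2.1
  nov : ∀ w ∈ V, e.2.1.1 < w.1 → w.1 < e.2.2.1 → w.2 ≠ ht e.1 w.1

def Cr (e f : BEdge) : Prop :=
  ∃ x, e.2.1.1 < x ∧ x < e.2.2.1 ∧ f.2.1.1 < x ∧ x < f.2.2.1 ∧ ht e.1 x = ht f.1 x

lemma ht_sign {l k : ℝ × ℝ} {m x : ℝ} (hmx : m < x) (h1 : ht l x < ht k x)
    (hno : ∀ y, m < y → y < x → ht l y ≠ ht k y) : ht l m ≤ ht k m := by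
  by_contra hc
  push Not at hc
  unfold ht at *
  have hs : 0 < k.1 - l.1 := by nlinarith
  have hy : (l.2 - k.2) / (k.1 - l.1) * (k.1 - l.1) = l.2 - k.2 := by field_simp
  set y := (l.2 - k.2) / (k.1 - l.1) with hyd
  apply hno y
  · nlinarith
  · nlinarith
  · nlinarith

lemma ht_lt_slope {l k : ℝ × ℝ} {a x : ℝ} (hmx : a < x) (h1 : ht l a = ht k a)
    (h : ht l x < ht k x) : l.1 < k.1 := by
  unfold ht at *
  nlinarith

lemma line_eq {l k : ℝ × ℝ} {a x : ℝ} (hmx : a ≠ x) (h1 : ht l a = ht k a)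
    (h : ht l x = ht k x) : l = k := by
  unfold ht at *
  have h0 : l.1 = k.1 := by
    have : (l.1 - k.1) * (a - x) = 0 := by linarith
    rcases mul_eq_zero.1 this with h | h
    · linarith
    · exact absurd (by linarith) hmx
  ext
  · exact h0
  · rw [h0] at h; linarith

lemma cr_of_line {e f : BEdge} (h : e.1 = f.1) (h1 : max e.2.1.1 f.2.1.1 < min e.2.2.1 f.2.2.1) :
    Cr e f := by
  obtain ⟨x, hx, hx'⟩ := exists_between h1
  simp only [max_lt_iff, lt_min_iff] at hx hx'
  exact ⟨x, hx.1, hx'.1, hx.2, hx'.2, by rw [h]⟩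

structure Charge (V : Finset (ℝ × ℝ)) (E : Finset BEdge) (e : BEdge) (g : BEdge) (w : ℝ × ℝ) : Prop where
  hw : w ∈ V
  hg : g ∈ E
  ga : g.2.1 = e.2.1
  sl : e.1.1 < g.1.1
  nx : ∀ f ∈ E, f.2.1 = e.2.1 → e.1.1 < f.1.1 → f.1.1 < g.1.1 → False
  aw : e.2.1.1 < w.1
  wb : w.1 ≤ e.2.2.1
  wb' : w.1 ≤ g.2.2.1
  lo : ht e.1 w.1 ≤ w.2
  hi : w.2 ≤ ht g.1 w.1
  mn : ∀ c ∈ V, e.2.1.1 < c.1 → c.1 < w.1 → ht e.1 c.1 ≤ c.2 → c.2 ≤ ht g.1 c.1 → False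

lemma exists_charge (V : Finset (ℝ × ℝ)) (E : Finset BEdge)
    (hE : ∀ e ∈ E, GoodE V e) (e : BEdge) (he : e ∈ E)
    (hne : ∃ f ∈ E, f.2.1 = e.2.1 ∧ e.1.1 < f.1.1) : ∃ g w, Charge V E e g w := by
  classical
  obtain ⟨f0, hf0, h1, h2⟩ := hne
  obtain ⟨g, hg, hgm⟩ := Finset.exists_min_image (E.filter fun f => f.2.1 = e.2.1 ∧ e.1.1 < f.1.1)
    (fun f => f.1.1) ⟨f0, by simp [hf0, h1, h2]⟩
  simp only [Finset.mem_filter] at hg hgm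
  obtain ⟨hgE, ga, sl⟩ := hg
  have Ge := hE e he
  have Gg := hE g hgE
  have hord : ∀ x, e.2.1.1 ≤ x → ht e.1 x ≤ ht g.1 x := by
    intro x hx
    have h1 := Ge.oa
    have h2 := Gg.oa
    rw [ga] at h2
    unfold ht at *
    nlinarith
  have hW : (V.filter fun w => e.2.1.1 < w.1 ∧ w.1 ≤ e.2.2.1 ∧ w.1 ≤ g.2.2.1 ∧ ht e.1 w.1 ≤ w.2 ∧
      w.2 ≤ ht g.1 w.1).Nonempty := by
    rcases le_total e.2.2.1 g.2.2.1 with h | h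
    · refine ⟨e.2.2, ?_⟩
      simp only [Finset.mem_filter]
      refine ⟨Ge.hb, Ge.lt, le_rfl, h, Ge.ob.ge, ?_⟩
      rw [Ge.ob]; exact hord _ Ge.lt.le
    · refine ⟨g.2.2, ?_⟩
      simp only [Finset.mem_filter]
      have := Gg.lt
      rw [ga] at this
      refine ⟨Gg.hb, this, h, le_rfl, ?_, Gg.ob.le⟩
      rw [Gg.ob]; exact hord _ this.le
  obtain ⟨w, hw, hwm⟩ := Finset.exists_min_image _ (fun w => w.1) hW
  simp only [Finset.mem_filter] at hw hwm
  obtain ⟨hwV, aw, wb, wb', lo, hi⟩ := hw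
  refine ⟨g, w, hwV, hgE, ga, sl, ?_, aw, wb, wb', lo, hi, ?_⟩
  · intro f hf hfa h1 h2
    exact absurd (hgm f ⟨hf, hfa, h1⟩) (not_le.2 h2)
  · intro c hc h1 h2 h3 h4
    exact absurd (hwm c ⟨hc, h1, by linarith, by linarith, h3, h4⟩) (not_le.2 h2)

lemma key (V : Finset (ℝ × ℝ)) (hV : Set.InjOn Prod.fst (V : Set (ℝ × ℝ))) (E : Finset BEdge)
    (hE : ∀ e ∈ E, GoodE V e) (hX : ∀ e ∈ E, ∀ f ∈ E, e ≠ f → ¬ Cr e f)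
    (e g f : BEdge) (w : ℝ × ℝ) (he : e ∈ E) (hf : f ∈ E) (C : Charge V E e g w)
    (cw : f.2.1.1 < w.1) (wd : w.1 ≤ f.2.2.1) (x0 x1 : ℝ)
    (h0 : max e.2.1.1 f.2.1.1 < x0) (h0' : x0 ≤ w.1) (h1 : max e.2.1.1 f.2.1.1 < x1) (h1' : x1 ≤ w.1)
    (hlo : ht e.1 x0 < ht f.1 x0) (hhi : ht f.1 x1 < ht g.1 x1) : False := by
  have hef : e ≠ f := by rintro rfl; exact lt_irrefl _ hlo
  have hfg : f ≠ g := by rintro rfl; exact lt_irrefl _ hhi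
  have Ge := hE e he
  have Gg := hE g C.hg
  have Gf := hE f hf
  have e1 := C.wb
  have e2 := C.wb'
  have ga := C.ga
  set m := max e.2.1.1 f.2.1.1 with hm
  have hm1 : e.2.1.1 ≤ m := le_max_left _ _
  have hm2 : f.2.1.1 ≤ m := le_max_right _ _
  have A1 : ht e.1 m ≤ ht f.1 m := by
    refine ht_sign h0 hlo fun y hy hy' hh => hX e he f hf hef ⟨y, ?_, ?_, ?_, ?_, hh⟩ <;> linarith
  have A2 : ht f.1 m ≤ ht g.1 m := by
    refine ht_sign h1 hhi fun y hy hy' hh => hX f hf g C.hg hfg ⟨y, ?_, ?_, ?_, ?_, hh⟩ <;>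
      (try rw [ga]) <;> linarith
  have oa := Ge.oa
  have oa' := Gg.oa
  rw [ga] at oa'
  rcases lt_trichotomy e.2.1.1 f.2.1.1 with h | h | h
  · have : m = f.2.1.1 := max_eq_right h.le
    rw [this, ← Gf.oa] at A1 A2
    exact C.mn _ Gf.ha h cw A1 A2
  · have hh := hV Ge.ha Gf.ha h
    have oa'' := Gf.oa
    rw [← hh] at oa''
    exact C.nx f hf hh.symm (ht_lt_slope (lt_of_le_of_lt hm1 h0) (oa.symm.trans oa'') hlo)
      (ht_lt_slope (lt_of_le_of_lt hm1 h1) (oa''.symm.trans oa') hhi)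
  · have : m = e.2.1.1 := max_eq_left h.le
    rw [this] at A1 A2
    have := C.aw
    exact Gf.nov _ Ge.ha h (by linarith) (by linarith)

lemma planar (V : Finset (ℝ × ℝ)) (hV : Set.InjOn Prod.fst (V : Set (ℝ × ℝ))) (E : Finset BEdge)
    (hE : ∀ e ∈ E, GoodE V e) (hX : ∀ e ∈ E, ∀ f ∈ E, e ≠ f → ¬ Cr e f) :
    E.card ≤ 3 * V.card := by
  classical
  set T := E.filter fun e => ¬ ∃ f ∈ E, f.2.1 = e.2.1 ∧ e.1.1 < f.1.1 with hT
  have hTc : T.card ≤ V.card := by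
    refine Finset.card_le_card_of_injOn (fun e => e.2.1) ?_ ?_
    · intro e he
      exact (hE e (Finset.mem_filter.1 he).1).ha
    · intro e he f hf hef
      simp only [hT, Finset.coe_filter, Set.mem_ofPred_eq] at he hf hef
      obtain ⟨he, he'⟩ := he
      obtain ⟨hf, hf'⟩ := hf
      push Not at he' hf'
      have s1 := he' f hf hef.symm
      have s2 := hf' e he hef
      have s : e.1.1 = f.1.1 := le_antisymm s2 s1
      have Ge := hE e he
      have Gf := hE f hf
      have o1 := Ge.oa
      have o2 := Gf.oa
      have l2 := Gf.lt
      rw [← hef] at o2 l2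
      have hl : e.1 = f.1 := by
        ext
        · exact s
        · unfold ht at o1 o2; rw [s] at o1; linarith
      by_contra hne
      refine hX e he f hf hne (cr_of_line hl ?_)
      rw [← hef]
      simp [Ge.lt, l2]
  set R := E.filter fun e => ∃ f ∈ E, f.2.1 = e.2.1 ∧ e.1.1 < f.1.1 with hR
  have hch : ∀ e, ∃ g w, e ∈ R → Charge V E e g w := by
    intro e
    by_cases he : e ∈ R
    · obtain ⟨he1, he2⟩ := Finset.mem_filter.1 he
      obtain ⟨g, w, h⟩ := exists_charge V E hE e he1 he2
      exact ⟨g, w, fun _ => h⟩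
    · exact ⟨e, 0, fun h => absurd h he⟩
  choose g w hgw using hch
  have hsplit : E.card = T.card + R.card := by
    rw [add_comm, hT, hR]
    exact (Finset.card_filter_add_card_filter_not _).symm
  have hsplit2 : R.card = (R.filter fun e => w e = e.2.2).card + (R.filter fun e => ¬ w e = e.2.2).card :=
    (Finset.card_filter_add_card_filter_not _).symm
  have h1 : (R.filter fun e => w e = e.2.2).card ≤ V.card := by
    refine Finset.card_le_card_of_injOn w ?_ ?_
    · intro e he
      exact (hgw e (Finset.mem_filter.1 he).1).hw
    · have main : ∀ e ∈ R, ∀ f ∈ R, w e = e.2.2 → w f = f.2.2 → w e = w f → ∀ x,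
          max e.2.1.1 f.2.1.1 < x → x < (w e).1 → ht e.1 x < ht f.1 x → False := by
        intro e he f hf h1 h2 h3 x hx hx' hlt
        have Ce := hgw e he
        have Cf := hgw f hf
        have Gf := hE f (Finset.mem_filter.1 hf).1
        have Ge := hE e (Finset.mem_filter.1 he).1
        refine key V hV E hE hX e (g e) f (w e) (Finset.mem_filter.1 he).1 (Finset.mem_filter.1 hf).1
          Ce (by rw [h3]; exact Cf.aw) (by rw [h3]; exact Cf.wb) x (w e).1 hx hx'.le (hx.trans hx') le_rfl hlt ?_
        have e1 : ht f.1 (w e).1 = ht e.1 (w e).1 := by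
          rw [h3, h2, ← Gf.ob, ← h2, ← h3, h1, ← Ge.ob]
        rw [e1]
        have := Ce.sl
        have o1 := Ge.oa
        have o2 := (hE _ Ce.hg).oa
        rw [Ce.ga] at o2
        have := Ce.aw
        unfold ht at *
        nlinarith
      intro e he f hf hef
      simp only [Finset.coe_filter, Set.mem_ofPred_eq] at he hf
      obtain ⟨he, he'⟩ := he
      obtain ⟨hf, hf'⟩ := hf
      have Ce := hgw e he
      have Cf := hgw f hf
      by_contra hne
      have hmx : max e.2.1.1 f.2.1.1 < (w e).1 := max_lt Ce.aw (by rw [hef]; exact Cf.aw)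
      obtain ⟨x, hx, hx'⟩ := exists_between hmx
      have hx2 := max_lt_iff.1 hx
      rcases lt_trichotomy (ht e.1 x) (ht f.1 x) with h | h | h
      · exact main e he f hf he' hf' hef x hx hx' h
      · exact hX e (Finset.mem_filter.1 he).1 f (Finset.mem_filter.1 hf).1 hne
          ⟨x, hx2.1, by rw [← he']; exact hx', hx2.2, by rw [← hf', ← hef]; exact hx', h⟩
      · exact main f hf e he hf' he' hef.symm x (by rwa [max_comm]) (by rwa [← hef]) h
  have h2 : (R.filter fun e => ¬ w e = e.2.2).card ≤ V.card := by
    refine Finset.card_le_card_of_injOn w ?_ ?_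
    · intro e he
      exact (hgw e (Finset.mem_filter.1 he).1).hw
    · have strict : ∀ e ∈ R, w e ≠ e.2.2 → (w e).1 < e.2.2.1 ∧ ht e.1 (w e).1 < (w e).2 := by
        intro e he hne
        have Ce := hgw e he
        have Ge := hE e (Finset.mem_filter.1 he).1
        have : (w e).1 < e.2.2.1 := lt_of_le_of_ne Ce.wb fun h => hne (hV Ce.hw Ge.hb h)
        exact ⟨this, lt_of_le_of_ne Ce.lo (Ge.nov _ Ce.hw Ce.aw this).symm⟩
      have main : ∀ e ∈ R, ∀ f ∈ R, w e ≠ e.2.2 → w f ≠ f.2.2 → w e = w f →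
          ht e.1 (w e).1 < ht f.1 (w e).1 → False := by
        intro e he f hf h1 h2 h3 hlt
        have Ce := hgw e he
        have Cf := hgw f hf
        have hmx : max e.2.1.1 f.2.1.1 < (w e).1 := max_lt Ce.aw (by rw [h3]; exact Cf.aw)
        refine key V hV E hE hX e (g e) f (w e) (Finset.mem_filter.1 he).1 (Finset.mem_filter.1 hf).1
          Ce (by rw [h3]; exact Cf.aw) (by rw [h3]; exact Cf.wb) (w e).1 (w e).1 hmx le_rfl hmx le_rfl hlt ?_
        have := (strict f hf h2).2
        rw [← h3] at this
        exact this.trans_le Ce.hi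
      intro e he f hf hef
      simp only [Finset.coe_filter, Set.mem_ofPred_eq] at he hf
      obtain ⟨he, he'⟩ := he
      obtain ⟨hf, hf'⟩ := hf
      by_contra hne
      rcases lt_trichotomy (ht e.1 (w e).1) (ht f.1 (w e).1) with h | h | h
      · exact main e he f hf he' hf' hef h
      · exact hX e (Finset.mem_filter.1 he).1 f (Finset.mem_filter.1 hf).1 hne
          ⟨(w e).1, (hgw e he).aw, (strict e he he').1, by rw [hef]; exact (hgw f hf).aw,
            by rw [hef]; exact (strict f hf hf').1, h⟩
      · exact main f hf e he hf' he' hef.symm (by rwa [← hef])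
  omega

open Classical in
lemma crossing (V : Finset (ℝ × ℝ)) (hV : Set.InjOn Prod.fst (V : Set (ℝ × ℝ))) (k : ℕ) :
    ∀ (E : Finset BEdge), E.card = k → (∀ e ∈ E, GoodE V e) →
    E.card ≤ 3 * V.card + ((E ×ˢ E).filter fun q => q.1 ≠ q.2 ∧ Cr q.1 q.2).card := by
  induction k with
  | zero => intro E h _; omega
  | succ k ih =>
    intro E hk hE
    by_cases hX : ∀ e ∈ E, ∀ f ∈ E, e ≠ f → ¬ Cr e f
    · have := planar V hV E hE hX
      omega
    · push Not at hX
      obtain ⟨e, he, f, hf, hef, hcr⟩ := hX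
      have hc := Finset.card_erase_of_mem he
      have h := ih (E.erase e) (by omega) fun x hx => hE x (Finset.mem_of_mem_erase hx)
      have : (((E.erase e) ×ˢ (E.erase e)).filter fun q => q.1 ≠ q.2 ∧ Cr q.1 q.2).card <
          ((E ×ˢ E).filter fun q => q.1 ≠ q.2 ∧ Cr q.1 q.2).card := by
        apply Finset.card_lt_card
        rw [Finset.ssubset_iff_of_subset]
        · exact ⟨(e, f), by simp [he, hf, hef, hcr], by simp⟩
        · intro q hq
          simp only [Finset.mem_filter, Finset.mem_product, Finset.mem_erase] at hq ⊢
          tauto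
      omega

lemma avg_one (V A : Finset (ℝ × ℝ)) (hA : A ⊆ V) (p : ℝ) :
    ∑ S ∈ V.powerset with A ⊆ S, p ^ S.card * (1 - p) ^ (V.card - S.card) = p ^ A.card := by
  classical
  have h := Finset.sum_pow_mul_eq_add_pow p (1 - p) (V \ A)
  rw [add_sub_cancel, one_pow] at h
  have h2 : ∑ S ∈ V.powerset with A ⊆ S, p ^ S.card * (1 - p) ^ (V.card - S.card) =
      ∑ t ∈ (V \ A).powerset, p ^ A.card * (p ^ t.card * (1 - p) ^ ((V \ A).card - t.card)) := by
    refine Finset.sum_nbij' (fun S => S \ A) (fun t => t ∪ A) ?_ ?_ ?_ ?_ ?_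
    · intro S hS
      simp only [Finset.mem_filter, Finset.mem_powerset] at hS ⊢
      exact Finset.sdiff_subset_sdiff hS.1 le_rfl
    · intro t ht
      simp only [Finset.mem_filter, Finset.mem_powerset] at ht ⊢
      exact ⟨Finset.union_subset (ht.trans Finset.sdiff_subset) hA, Finset.subset_union_right⟩
    · intro S hS
      simp only [Finset.mem_filter, Finset.mem_powerset] at hS
      exact Finset.sdiff_union_of_subset hS.2
    · intro t ht
      simp only [Finset.mem_powerset] at ht
      rw [Finset.union_sdiff_right]
      exact Finset.sdiff_eq_self_of_disjoint (Finset.disjoint_of_subset_left ht Finset.sdiff_disjoint)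
    · intro S hS
      simp only [Finset.mem_filter, Finset.mem_powerset] at hS
      have c1 := Finset.card_sdiff_add_card_eq_card hS.2
      have c2 := Finset.card_sdiff_add_card_eq_card hA
      have c3 := Finset.card_le_card hS.1
      rw [← mul_assoc, ← pow_add]
      congr 2 <;> omega
  rw [h2, ← Finset.mul_sum, h, mul_one]

open Classical in
lemma avg_gen {ι : Type*} (V : Finset (ℝ × ℝ)) (I : Finset ι) (A : ι → Finset (ℝ × ℝ)) (j : ℕ)
    (hA : ∀ i ∈ I, A i ⊆ V) (hj : ∀ i ∈ I, (A i).card = j) (p : ℝ) :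
    ∑ S ∈ V.powerset, p ^ S.card * (1 - p) ^ (V.card - S.card) * ((I.filter fun i => A i ⊆ S).card : ℝ)
      = I.card * p ^ j := by
  have : ∀ S ∈ V.powerset, p ^ S.card * (1 - p) ^ (V.card - S.card) * ((I.filter fun i => A i ⊆ S).card : ℝ)
      = ∑ i ∈ I, if A i ⊆ S then p ^ S.card * (1 - p) ^ (V.card - S.card) else 0 := by
    intro S _
    rw [← Finset.sum_filter, Finset.sum_const, nsmul_eq_mul, mul_comm]
  rw [Finset.sum_congr rfl this, Finset.sum_comm]
  have h2 : ∀ i ∈ I, (∑ S ∈ V.powerset, if A i ⊆ S then p ^ S.card * (1 - p) ^ (V.card - S.card) else 0)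
      = p ^ j := by
    intro i hi
    rw [← Finset.sum_filter, avg_one V (A i) (hA i hi), hj i hi]
  rw [Finset.sum_congr rfl h2, Finset.sum_const, nsmul_eq_mul]

lemma same_line {V : Finset (ℝ × ℝ)} (hV : Set.InjOn Prod.fst (V : Set (ℝ × ℝ))) {e f : BEdge}
    (Ge : GoodE V e) (Gf : GoodE V f) (hl : e.1 = f.1) {x : ℝ} (h1 : e.2.1.1 < x) (h2 : x < e.2.2.1)
    (h3 : f.2.1.1 < x) (h4 : x < f.2.2.1) : e = f := by
  have ea : e.2.1 = f.2.1 := by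
    apply hV Ge.ha Gf.ha
    rcases lt_trichotomy e.2.1.1 f.2.1.1 with h | h | h
    · exact absurd (by rw [hl]; exact Gf.oa) (Ge.nov _ Gf.ha h (by linarith))
    · exact h
    · exact absurd (by rw [← hl]; exact Ge.oa) (Gf.nov _ Ge.ha h (by linarith))
  have eb : e.2.2 = f.2.2 := by
    apply hV Ge.hb Gf.hb
    rcases lt_trichotomy e.2.2.1 f.2.2.1 with h | h | h
    · exact absurd (by rw [← hl]; exact Ge.ob) (Gf.nov _ Ge.hb (by linarith) h)
    · exact h
    · exact absurd (by rw [hl]; exact Gf.ob) (Ge.nov _ Gf.hb (by linarith) h)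
  exact Prod.ext hl (Prod.ext ea eb)

lemma four_pts {V : Finset (ℝ × ℝ)} (hV : Set.InjOn Prod.fst (V : Set (ℝ × ℝ))) {e f : BEdge}
    (Ge : GoodE V e) (Gf : GoodE V f) (hne : e ≠ f) (hc : Cr e f) :
    ({e.2.1, e.2.2, f.2.1, f.2.2} : Finset (ℝ × ℝ)).card = 4 := by
  classical
  obtain ⟨x, h1, h2, h3, h4, h5⟩ := hc
  have n1 : e.2.1 ≠ e.2.2 := fun h => by have := Ge.lt; rw [h] at this; exact lt_irrefl _ this
  have n2 : f.2.1 ≠ f.2.2 := fun h => by have := Gf.lt; rw [h] at this; exact lt_irrefl _ this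
  have n3 : e.2.1 ≠ f.2.2 := fun h => by rw [h] at h1; linarith
  have n4 : e.2.2 ≠ f.2.1 := fun h => by rw [h] at h2; linarith
  have n5 : e.2.1 ≠ f.2.1 := fun h => by
    have o1 := Ge.oa
    have o2 := Gf.oa
    rw [← h] at o2
    exact hne (same_line hV Ge Gf (line_eq h1.ne (o1.symm.trans o2) h5) h1 h2 h3 h4)
  have n6 : e.2.2 ≠ f.2.2 := fun h => by
    have o1 := Ge.ob
    have o2 := Gf.ob
    rw [← h] at o2
    exact hne (same_line hV Ge Gf (line_eq h2.ne' (o1.symm.trans o2) h5) h1 h2 h3 h4)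
  rw [Finset.card_insert_of_notMem, Finset.card_insert_of_notMem, Finset.card_insert_of_notMem,
    Finset.card_singleton]
  · simpa using n2
  · simp [n4, n6]
  · simp [n1, n3, n5]

open Classical in
/-- points of `V` on the line `y = l.1 x + l.2`. -/
def pts (V : Finset (ℝ × ℝ)) (l : ℝ × ℝ) : Finset (ℝ × ℝ) := V.filter fun p => p.2 = ht l p.1

lemma mem_pts {V : Finset (ℝ × ℝ)} {l p : ℝ × ℝ} : p ∈ pts V l ↔ p ∈ V ∧ p.2 = ht l p.1 := by
  simp [pts]

open Classical in
lemma count_line (V : Finset (ℝ × ℝ)) (hV : Set.InjOn Prod.fst (V : Set (ℝ × ℝ)))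
    (E : Finset BEdge) (l : ℝ × ℝ) (hE : ∀ e : BEdge, e.1 = l → GoodE V e → e ∈ E) :
    (pts V l).card ≤ 1 + (E.filter fun e => e.1 = l).card := by
  rcases (pts V l).eq_empty_or_nonempty with h | h
  · simp [h]
  obtain ⟨M, hM, hMm⟩ := Finset.exists_max_image (pts V l) (fun p => p.1) h
  have hs : ∀ p, ∃ q, p ∈ (pts V l).erase M → GoodE V (l, p, q) := by
    intro p
    by_cases hp : p ∈ (pts V l).erase M
    swap
    · exact ⟨p, fun h => absurd h hp⟩
    obtain ⟨hpM, hp⟩ := Finset.mem_erase.1 hp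
    have hlt : p.1 < M.1 := lt_of_le_of_ne (hMm p hp) fun h =>
      hpM (hV (mem_pts.1 hp).1 (mem_pts.1 hM).1 h)
    obtain ⟨q, hq, hqm⟩ := Finset.exists_min_image ((pts V l).filter fun q => p.1 < q.1)
      (fun q => q.1) ⟨M, by simp [hM, hlt]⟩
    simp only [Finset.mem_filter, mem_pts] at hq hqm hp
    refine ⟨q, fun _ => ⟨hp.1, hq.1.1, hq.2, hp.2, hq.1.2, ?_⟩⟩
    intro w hw h1 h2 h3
    exact absurd (hqm w ⟨⟨hw, h3⟩, h1⟩) (not_le.2 h2)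
  choose s hs using hs
  have h1 := Finset.card_erase_of_mem hM
  have h2 : ((pts V l).erase M).card ≤ (E.filter fun e => e.1 = l).card := by
    refine Finset.card_le_card_of_injOn (fun p => (l, p, s p)) ?_ ?_
    · intro p hp
      simp only [Finset.coe_filter, Set.mem_ofPred_eq]
      exact ⟨hE _ rfl (hs p hp), trivial⟩
    · intro p _ q _ hpq
      simp only [Prod.mk.injEq] at hpq
      exact hpq.2.1
  omega

lemma szt (V : Finset (ℝ × ℝ)) (hV : Set.InjOn Prod.fst (V : Set (ℝ × ℝ)))
    (L : Finset (ℝ × ℝ)) (κ : ℝ) (hκ : 1 ≤ κ) :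
    ∑ l ∈ L, ((pts V l).card : ℝ) ≤ L.card + 3 * V.card * κ + (L.card : ℝ) ^ 2 / κ ^ 2 := by
  classical
  set E : Finset BEdge := (L ×ˢ V ×ˢ V).filter fun e => GoodE V e with hEd
  have hE : ∀ e ∈ E, GoodE V e := fun e he => (Finset.mem_filter.1 he).2
  have c1 : ∑ l ∈ L, (pts V l).card ≤ L.card + E.card := by
    have : E.card = ∑ l ∈ L, (E.filter fun e => e.1 = l).card :=
      Finset.card_eq_sum_card_fiberwise fun e he => by
        have := (Finset.mem_filter.1 he).1
        simp only [Finset.mem_product] at this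
        exact this.1
    rw [this]
    calc _ ≤ ∑ l ∈ L, (1 + (E.filter fun e => e.1 = l).card) := by
          refine Finset.sum_le_sum fun l hl => count_line V hV E l fun e he hg => ?_
          simp only [hEd, Finset.mem_filter, Finset.mem_product]
          exact ⟨⟨he ▸ hl, hg.ha, hg.hb⟩, hg⟩
      _ = _ := by rw [Finset.sum_add_distrib]; simp
  set X := (E ×ˢ E).filter fun q => q.1 ≠ q.2 ∧ Cr q.1 q.2 with hX
  have hXm : ∀ q ∈ X, GoodE V q.1 ∧ GoodE V q.2 ∧ q.1 ≠ q.2 ∧ Cr q.1 q.2 ∧ q.1 ∈ E ∧ q.2 ∈ E := by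
    intro q hq
    simp only [hX, Finset.mem_filter, Finset.mem_product] at hq
    exact ⟨hE _ hq.1.1, hE _ hq.1.2, hq.2.1, hq.2.2, hq.1.1, hq.1.2⟩
  have cX : X.card ≤ L.card ^ 2 := by
    rw [pow_two, ← Finset.card_product]
    refine Finset.card_le_card_of_injOn (fun q => (q.1.1, q.2.1)) ?_ ?_
    · intro q hq
      obtain ⟨-, -, -, -, h5, h6⟩ := hXm q hq
      simp only [hEd, Finset.mem_filter, Finset.mem_product] at h5 h6
      simp only [Finset.coe_product, Set.mem_prod, Finset.mem_coe]
      exact ⟨h5.1.1, h6.1.1⟩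
    · intro q hq r hr hqr
      simp only [Prod.mk.injEq] at hqr
      obtain ⟨g1, g2, g3, ⟨x, x1, x2, x3, x4, x5⟩, -, -⟩ := hXm q hq
      obtain ⟨g1', g2', g3', ⟨y, y1, y2, y3, y4, y5⟩, -, -⟩ := hXm r hr
      have hxy : x = y := by
        by_contra hne
        rw [← hqr.1, ← hqr.2] at y5
        exact g3 (same_line hV g1 g2 (line_eq hne x5 y5) x1 x2 x3 x4)
      subst hxy
      exact Prod.ext (same_line hV g1 g1' hqr.1 x1 x2 y1 y2) (same_line hV g2 g2' hqr.2 x3 x4 y3 y4)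
  set p := κ⁻¹ with hp
  have hκ0 : 0 < κ := by linarith
  have hp0 : 0 < p := inv_pos.2 hκ0
  have hp1 : p ≤ 1 := inv_le_one_of_one_le₀ hκ
  have a1 := avg_gen V E (fun e => {e.2.1, e.2.2}) 2
    (fun e he => by
      intro v hv
      simp only [Finset.mem_insert, Finset.mem_singleton] at hv
      rcases hv with rfl | rfl
      · exact (hE e he).ha
      · exact (hE e he).hb)
    (fun e he => Finset.card_pair fun h => by
      have := (hE e he).lt; rw [h] at this; exact lt_irrefl _ this) p
  have a2 := avg_gen V V (fun v => {v}) 1 (fun v hv => by simpa using hv) (fun v hv => by simp) p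
  have a3 := avg_gen V X (fun q => {q.1.2.1, q.1.2.2, q.2.2.1, q.2.2.2}) 4
    (fun q hq => by
      intro v hv
      obtain ⟨g1, g2, -⟩ := hXm q hq
      simp only [Finset.mem_insert, Finset.mem_singleton] at hv
      rcases hv with rfl | rfl | rfl | rfl
      · exact g1.ha
      · exact g1.hb
      · exact g2.ha
      · exact g2.hb)
    (fun q hq => by
      obtain ⟨g1, g2, g3, g4, -⟩ := hXm q hq
      exact four_pts hV g1 g2 g3 g4) p
  have main : (E.card : ℝ) * p ^ 2 ≤ 3 * (V.card * p ^ 1) + X.card * p ^ 4 := by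
    rw [← a1, ← a2, ← a3, Finset.mul_sum, ← Finset.sum_add_distrib]
    refine Finset.sum_le_sum fun S hS => ?_
    have hS := Finset.mem_powerset.1 hS
    have hw : 0 ≤ p ^ S.card * (1 - p) ^ (V.card - S.card) :=
      mul_nonneg (pow_nonneg hp0.le _) (pow_nonneg (by linarith) _)
    have hc := crossing S (hV.mono (by exact_mod_cast hS)) _
      (E.filter fun e => ({e.2.1, e.2.2} : Finset (ℝ × ℝ)) ⊆ S) rfl (fun e he => by
        obtain ⟨he, he'⟩ := Finset.mem_filter.1 he
        have G := hE e he
        exact ⟨he' (by simp), he' (by simp), G.lt, G.oa, G.ob, fun w hw => G.nov w (hS hw)⟩)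
    have e1 : (V.filter fun v => ({v} : Finset (ℝ × ℝ)) ⊆ S).card = S.card := by
      congr 1
      ext v
      simp only [Finset.mem_filter, Finset.singleton_subset_iff]
      exact ⟨fun h => h.2, fun h => ⟨hS h, h⟩⟩
    have e2 : (((E.filter fun e => ({e.2.1, e.2.2} : Finset (ℝ × ℝ)) ⊆ S) ×ˢ
        (E.filter fun e => ({e.2.1, e.2.2} : Finset (ℝ × ℝ)) ⊆ S)).filter fun q => q.1 ≠ q.2 ∧ Cr q.1 q.2).card
        ≤ (X.filter fun q => ({q.1.2.1, q.1.2.2, q.2.2.1, q.2.2.2} : Finset (ℝ × ℝ)) ⊆ S).card := by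
      apply Finset.card_le_card
      intro q hq
      simp only [hX, Finset.mem_filter, Finset.mem_product, Finset.insert_subset_iff,
        Finset.singleton_subset_iff] at hq ⊢
      tauto
    have hc' := hc.trans (Nat.add_le_add_left e2 _)
    rw [e1]
    have hc'' : ((E.filter fun e => ({e.2.1, e.2.2} : Finset (ℝ × ℝ)) ⊆ S).card : ℝ) ≤ 3 * S.card +
      (X.filter fun q => ({q.1.2.1, q.1.2.2, q.2.2.1, q.2.2.2} : Finset (ℝ × ℝ)) ⊆ S).card := by
      exact_mod_cast hc'
    calc _ ≤ _ := mul_le_mul_of_nonneg_left hc'' hw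
      _ = _ := by ring
  have cX' : (X.card : ℝ) ≤ (L.card : ℝ) ^ 2 := by exact_mod_cast cX
  have c1' : ∑ l ∈ L, ((pts V l).card : ℝ) ≤ L.card + E.card := by exact_mod_cast c1
  have hpk : p * κ = 1 := inv_mul_cancel₀ hκ0.ne'
  have : (E.card : ℝ) ≤ 3 * V.card * κ + (L.card : ℝ) ^ 2 / κ ^ 2 := by
    have h1 := mul_le_mul_of_nonneg_right main (pow_nonneg hκ0.le 2)
    have e1 : (E.card : ℝ) * p ^ 2 * κ ^ 2 = E.card := by
      rw [mul_assoc, ← mul_pow, hpk]; ring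
    have e2 : (3 * (V.card * p ^ 1) + X.card * p ^ 4) * κ ^ 2 = 3 * V.card * κ + X.card / κ ^ 2 := by
      rw [hp]; field_simp
    rw [e1, e2] at h1
    have : (X.card : ℝ) / κ ^ 2 ≤ (L.card : ℝ) ^ 2 / κ ^ 2 := by gcongr
    linarith
  linarith

lemma rich (V : Finset (ℝ × ℝ)) (hV : Set.InjOn Prod.fst (V : Set (ℝ × ℝ)))
    (L : Finset (ℝ × ℝ)) (t : ℝ) (ht : 2 ≤ t) (hL : ∀ l ∈ L, t ≤ (pts V l).card) :
    (L.card : ℝ) ≤ 2304 * (V.card : ℝ) ^ 2 / t ^ 3 + 12 * V.card / t := by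
  have hs : L.card * t ≤ ∑ l ∈ L, ((pts V l).card : ℝ) := by
    rw [← nsmul_eq_mul]; exact Finset.card_nsmul_le_sum _ _ _ hL
  set M : ℝ := (L.card : ℝ) with hM
  set N : ℝ := (V.card : ℝ) with hN
  have hM0 : 0 ≤ M := Nat.cast_nonneg _
  have hN0 : 0 ≤ N := Nat.cast_nonneg _
  have ht0 : 0 < t := by linarith
  have A1 : 0 ≤ 2304 * N ^ 2 / t ^ 3 := by positivity
  have A2 : 0 ≤ 12 * N / t := by positivity
  rcases le_total (4 * M) t with h | h
  · have := szt V hV L 1 le_rfl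
    have h2 : M ≤ 12 * N / t := by
      rw [le_div_iff₀ ht0]
      simp only [← hM, ← hN] at this
      nlinarith
    linarith
  · have hx : 1 ≤ 4 * M / t := by rw [le_div_iff₀ ht0]; linarith
    set κ := Real.sqrt (4 * M / t) with hκ
    have k1 : 1 ≤ κ := Real.one_le_sqrt.2 hx
    have k2 : κ ^ 2 = 4 * M / t := Real.sq_sqrt (by linarith)
    have := szt V hV L κ k1
    simp only [← hM, ← hN] at this
    have hMp : 0 < M := by linarith
    rw [k2] at this
    have e : M ^ 2 / (4 * M / t) = M * t / 4 := by field_simp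
    rw [e] at this
    have h3 : M * t ≤ 12 * N * κ := by nlinarith
    have h4 : (M * t) ^ 2 ≤ (12 * N * κ) ^ 2 := by gcongr
    have h5 : (12 * N * κ) ^ 2 = 144 * N ^ 2 * (4 * M / t) := by rw [mul_pow, k2]; ring
    rw [h5] at h4
    have h6 : M * t ^ 3 ≤ 576 * N ^ 2 := by
      have : (M * t) ^ 2 * t ≤ 576 * N ^ 2 * M := by
        calc _ ≤ 144 * N ^ 2 * (4 * M / t) * t := by gcongr
          _ = _ := by field_simp; ring
      have : M * (M * t ^ 3) ≤ M * (576 * N ^ 2) := by nlinarith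
      exact le_of_mul_le_mul_left this hMp
    have : M ≤ 2304 * N ^ 2 / t ^ 3 := by
      rw [le_div_iff₀ (by positivity)]
      nlinarith [sq_nonneg N]
    linarith

lemma final_case (V R B : Finset (ℝ × ℝ)) (hV : Set.InjOn Prod.fst (V : Set (ℝ × ℝ)))
    (hR : R ⊆ V) (hB : B ⊆ V) (l0 : ℝ × ℝ) (hB0 : ∀ q ∈ B, q.2 = ht l0 q.1)
    (hR0 : ∀ p ∈ R, p.2 ≠ ht l0 p.1) (L : Finset (ℝ × ℝ))
    (hL : ∀ p ∈ R, ∀ q ∈ B, ∃ l ∈ L, p.2 = ht l p.1 ∧ q.2 = ht l q.1)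
    (n δ : ℝ) (hn : 0 < n) (hδ : 0 < δ) (hδ1 : δ ≤ 1) (hm : n / 2 ≤ R.card) (hb : δ * n ≤ B.card)
    (h6 : 6 ≤ δ * n) : δ ^ 2 / 100 * n ^ 2 ≤ L.card := by
  classical
  have inc : (R.card : ℝ) * B.card ≤ ∑ l ∈ L, ((pts R l).card : ℝ) := by
    have h1 : ∀ p ∈ R, B.card ≤ (L.filter fun l => p.2 = ht l p.1).card := by
      intro p hp
      have : ∀ q, ∃ l, q ∈ B → l ∈ L ∧ p.2 = ht l p.1 ∧ q.2 = ht l q.1 := by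
        intro q
        by_cases hq : q ∈ B
        · obtain ⟨l, h⟩ := hL p hp q hq
          exact ⟨l, fun _ => h⟩
        · exact ⟨0, fun h => absurd h hq⟩
      choose f hf using this
      refine Finset.card_le_card_of_injOn f ?_ ?_
      · intro q hq
        simp only [Finset.coe_filter, Set.mem_ofPred_eq]
        exact ⟨(hf q hq).1, (hf q hq).2.1⟩
      · intro q hq q' hq' hqq
        by_contra hne
        have hx : q.1 ≠ q'.1 := fun h => hne (hV (hB hq) (hB hq') h)
        have e1 := (hf q hq).2.2
        have e2 := (hf q' hq').2.2
        rw [← hqq] at e2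
        have : f q = l0 := line_eq hx (e1.symm.trans (hB0 q hq)) (e2.symm.trans (hB0 q' hq'))
        exact hR0 p hp (this ▸ (hf q hq).2.1)
    have h2 : R.card * B.card ≤ ∑ l ∈ L, (pts R l).card := by
      calc R.card * B.card ≤ ∑ p ∈ R, (L.filter fun l => p.2 = ht l p.1).card := by
            rw [← smul_eq_mul]; exact Finset.card_nsmul_le_sum _ _ _ h1
        _ = ∑ p ∈ R, ∑ l ∈ L, if p.2 = ht l p.1 then 1 else 0 := by simp only [Finset.card_filter]
        _ = ∑ l ∈ L, ∑ p ∈ R, if p.2 = ht l p.1 then 1 else 0 := Finset.sum_comm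
        _ = _ := by simp only [pts, Finset.card_filter]
    exact_mod_cast h2
  set b : ℝ := (B.card : ℝ) with hbd
  set m : ℝ := (R.card : ℝ) with hmd
  have s := szt R (hV.mono (by exact_mod_cast hR)) L (b / 6) (by linarith)
  set M : ℝ := (L.card : ℝ) with hM
  simp only [← hmd] at s
  have s2 : m * b / 2 ≤ M + M ^ 2 / (b / 6) ^ 2 := by linarith
  by_contra hc
  push Not at hc
  have hM0 : 0 ≤ M := Nat.cast_nonneg _
  have hdn : 0 < δ * n := by positivity
  have t1 : δ * n ^ 2 / 4 ≤ m * b / 2 := by nlinarith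
  have t2 : M ^ 2 / (b / 6) ^ 2 ≤ (δ ^ 2 / 100 * n ^ 2) ^ 2 / (δ * n / 6) ^ 2 := by
    gcongr
  have t3 : (δ ^ 2 / 100 * n ^ 2) ^ 2 / (δ * n / 6) ^ 2 = 36 / 10000 * (δ ^ 2 * n ^ 2) := by
    field_simp; norm_num
  have t4 : δ ^ 2 * n ^ 2 ≤ δ * n ^ 2 := by
    have : 0 ≤ n ^ 2 := by positivity
    nlinarith
  have t5 : 0 < δ * n ^ 2 := by positivity
  linarith

lemma sum_Ioo_id (d w : ℕ) (h : d ≤ w) :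
    2 * ∑ t ∈ Finset.Ioo d (w + 1), t + d * (d + 1) = w * (w + 1) := by
  induction w, h using Nat.le_induction with
  | base => simp
  | succ w hw ih =>
    have : Finset.Ioo d (w + 1 + 1) = insert (w + 1) (Finset.Ioo d (w + 1)) := by
      ext x; simp only [Finset.mem_Ioo, Finset.mem_insert]; omega
    rw [this, Finset.sum_insert (by simp)]
    nlinarith

lemma sq_le_sum (d w : ℕ) (h : 2 * d ≤ w) :
    w ^ 2 ≤ 3 * ∑ t ∈ Finset.Ioo d (w + 1), t := by
  have := sum_Ioo_id d w (by omega)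
  nlinarith

lemma mid_bound (V : Finset (ℝ × ℝ)) (hV : Set.InjOn Prod.fst (V : Set (ℝ × ℝ)))
    (L : Finset (ℝ × ℝ)) (d T : ℕ) (hd : 1 ≤ d)
    (h1 : ∀ l ∈ L, 2 * d ≤ (pts V l).card) (h2 : ∀ l ∈ L, (pts V l).card ≤ T) :
    ∑ l ∈ L, ((pts V l).card : ℝ) ^ 2 ≤
      3 * (2304 * (V.card : ℝ) ^ 2 * (2 / (d + 1)) + 12 * V.card * T) := by
  classical
  have a : ∑ l ∈ L, (pts V l).card ^ 2 ≤
      3 * ∑ t ∈ Finset.Ioo d (T + 1), t * (L.filter fun l => t ≤ (pts V l).card).card := by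
    calc ∑ l ∈ L, (pts V l).card ^ 2
        ≤ ∑ l ∈ L, 3 * ∑ t ∈ Finset.Ioo d (T + 1), if t ≤ (pts V l).card then t else 0 := by
          refine Finset.sum_le_sum fun l hl => (sq_le_sum d _ (h1 l hl)).trans ?_
          rw [← Finset.sum_filter]
          refine Nat.mul_le_mul_left _ (Finset.sum_le_sum_of_subset ?_)
          intro t ht
          have := h2 l hl
          simp only [Finset.mem_filter, Finset.mem_Ioo] at ht ⊢
          omega
      _ = 3 * ∑ t ∈ Finset.Ioo d (T + 1), ∑ l ∈ L, if t ≤ (pts V l).card then t else 0 := by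
          rw [← Finset.mul_sum, Finset.sum_comm]
      _ = _ := by
          congr 1
          refine Finset.sum_congr rfl fun t _ => ?_
          rw [← Finset.sum_filter, Finset.sum_const, smul_eq_mul, mul_comm]
  have a' : ∑ l ∈ L, ((pts V l).card : ℝ) ^ 2 ≤
      3 * ∑ t ∈ Finset.Ioo d (T + 1), (t : ℝ) * (L.filter fun l => t ≤ (pts V l).card).card := by
    exact_mod_cast a
  refine a'.trans (mul_le_mul_of_nonneg_left ?_ (by norm_num))
  set N : ℝ := (V.card : ℝ) with hN
  have hN0 : 0 ≤ N := Nat.cast_nonneg _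
  calc _ ≤ ∑ t ∈ Finset.Ioo d (T + 1), (2304 * N ^ 2 * ((t : ℝ) ^ 2)⁻¹ + 12 * N) := by
        refine Finset.sum_le_sum fun t htm => ?_
        have ht2 : 2 ≤ t := by simp only [Finset.mem_Ioo] at htm; omega
        have ht2' : (2 : ℝ) ≤ t := by exact_mod_cast ht2
        have := rich V hV (L.filter fun l => t ≤ (pts V l).card) t ht2' (fun l hl => by
          exact_mod_cast (Finset.mem_filter.1 hl).2)
        calc _ ≤ (t : ℝ) * (2304 * N ^ 2 / (t : ℝ) ^ 3 + 12 * N / t) := by gcongr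
          _ = _ := by field_simp
    _ = 2304 * N ^ 2 * ∑ t ∈ Finset.Ioo d (T + 1), ((t : ℝ) ^ 2)⁻¹ +
          ((Finset.Ioo d (T + 1)).card : ℝ) * (12 * N) := by
        rw [Finset.sum_add_distrib, Finset.mul_sum, Finset.sum_const, nsmul_eq_mul]
    _ ≤ 2304 * N ^ 2 * (2 / (d + 1)) + T * (12 * N) := by
        have e1 : ∑ t ∈ Finset.Ioo d (T + 1), ((t : ℝ) ^ 2)⁻¹ ≤ 2 / (d + 1) := sum_Ioo_inv_sq_le d (T + 1)
        have e2 : ((Finset.Ioo d (T + 1)).card : ℝ) ≤ T := by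
          have : (Finset.Ioo d (T + 1)).card ≤ T := by rw [Nat.card_Ioo]; omega
          exact_mod_cast this
        gcongr
    _ = _ := by ring

def HH : ℝ := 9216 * 2000000 ^ 3 + 24 * 2000000

lemma comb (P Q : Finset (ℝ × ℝ)) (n : ℕ) (hd : Disjoint P Q) (hP : P.card = n) (hQ : Q.card = n)
    (V : Finset (ℝ × ℝ)) (hVd : V = P ∪ Q)
    (hV : Set.InjOn Prod.fst (V : Set (ℝ × ℝ)))
    (hr : ∀ l, (pts V l).card ≤ n) (L : Finset (ℝ × ℝ))
    (hL : ∀ p ∈ P, ∀ q ∈ Q, ∃ l ∈ L, p.2 = ht l p.1 ∧ q.2 = ht l q.1) :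
    (1 / (2 * HH)) ^ 2 / 100 * (n : ℝ) ^ 2 ≤ L.card := by
  classical
  have hH : 0 < HH := by unfold HH; norm_num
  rcases Nat.eq_zero_or_pos n with h0 | hn
  · subst h0; simp
  have hn1 : (1 : ℝ) ≤ n := by exact_mod_cast hn
  rcases lt_or_ge (n : ℝ) (12 * HH) with hsmall | hbig
  · obtain ⟨p, hp⟩ := Finset.card_pos.1 (hP ▸ hn)
    obtain ⟨q, hq⟩ := Finset.card_pos.1 (hQ ▸ hn)
    obtain ⟨l, hl, -⟩ := hL p hp q hq
    have h1 : 1 ≤ L.card := Finset.card_pos.2 ⟨l, hl⟩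
    have h1' : (1 : ℝ) ≤ L.card := by exact_mod_cast h1
    refine le_trans ?_ h1'
    calc (1 / (2 * HH)) ^ 2 / 100 * (n : ℝ) ^ 2 ≤ (1 / (2 * HH)) ^ 2 / 100 * (12 * HH) ^ 2 := by gcongr
      _ ≤ 1 := by field_simp; norm_num
  have hPV : P ⊆ V := hVd ▸ Finset.subset_union_left
  have hQV : Q ⊆ V := hVd ▸ Finset.subset_union_right
  have hsum : ∀ l, (pts P l).card + (pts Q l).card = (pts V l).card := by
    intro l
    rw [← Finset.card_union_of_disjoint, hVd]
    · simp only [pts, Finset.filter_union]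
    · exact Finset.disjoint_filter_filter hd
  have hcardV : (V.card : ℝ) = 2 * n := by
    rw [hVd, Finset.card_union_of_disjoint hd, hP, hQ]; push_cast; ring
  have hpairs : ((n : ℝ)) ^ 2 ≤ ∑ l ∈ L, ((pts P l).card : ℝ) * (pts Q l).card := by
    have : P ×ˢ Q ⊆ L.biUnion fun l => pts P l ×ˢ pts Q l := by
      intro x hx
      obtain ⟨hx1, hx2⟩ := Finset.mem_product.1 hx
      obtain ⟨l, hl, h1, h2⟩ := hL _ hx1 _ hx2
      simp only [Finset.mem_biUnion, Finset.mem_product, mem_pts]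
      exact ⟨l, hl, ⟨hx1, h1⟩, hx2, h2⟩
    have h2 := (Finset.card_le_card this).trans Finset.card_biUnion_le
    simp only [Finset.card_product, hP, hQ] at h2
    rw [pow_two]
    exact_mod_cast h2
  set d : ℕ := 1000000 with hdd
  set T : ℕ := n / 2000000 with hT
  set w : ℝ × ℝ → ℕ := fun l => (pts V l).card with hw
  set F : ℝ × ℝ → ℝ := fun l => ((pts P l).card : ℝ) * (pts Q l).card with hF
  have hF2 : ∀ l, F l ≤ (w l : ℝ) ^ 2 := by
    intro l
    have := hsum l
    have h1 : ((pts P l).card : ℝ) ≤ w l := by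
      have : (pts P l).card ≤ w l := by simp only [hw]; omega
      exact_mod_cast this
    have h2 : ((pts Q l).card : ℝ) ≤ w l := by
      have : (pts Q l).card ≤ w l := by simp only [hw]; omega
      exact_mod_cast this
    rw [pow_two]
    simp only [hF]
    gcongr
  have sp1 : ∑ l ∈ L with w l < 2 * d, F l + ∑ l ∈ L with ¬ w l < 2 * d, F l = ∑ l ∈ L, F l := by
    convert Finset.sum_filter_add_sum_filter_not L (fun l => w l < 2 * d) F
  have sp2 : ∑ l ∈ (L.filter fun l => ¬ w l < 2 * d) with w l ≤ T, F l +
      ∑ l ∈ (L.filter fun l => ¬ w l < 2 * d) with ¬ w l ≤ T, F l =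
      ∑ l ∈ L with ¬ w l < 2 * d, F l := by
    convert Finset.sum_filter_add_sum_filter_not (L.filter fun l => ¬ w l < 2 * d) (fun l => w l ≤ T) F
  have lowb : ∑ l ∈ L with w l < 2 * d, F l ≤ L.card * 4000000000000 := by
    calc _ ≤ ∑ l ∈ L with w l < 2 * d, (4000000000000 : ℝ) := by
          refine Finset.sum_le_sum fun l hl => (hF2 l).trans ?_
          have : w l ≤ 2000000 := by have := (Finset.mem_filter.1 hl).2; omega
          have h' : (w l : ℝ) ≤ 2000000 := by exact_mod_cast this
          have h0 : (0 : ℝ) ≤ w l := Nat.cast_nonneg _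
          nlinarith
      _ = ((L.filter fun l => w l < 2 * d).card : ℝ) * 4000000000000 := by
          rw [Finset.sum_const, nsmul_eq_mul]
      _ ≤ _ := by
          gcongr
          exact Finset.filter_subset _ _
  have hTn : (T : ℝ) ≤ n / 2000000 := by
    rw [hT]; exact_mod_cast Nat.cast_div_le (α := ℝ) (m := n) (n := 2000000)
  have midb : ∑ l ∈ (L.filter fun l => ¬ w l < 2 * d) with w l ≤ T, F l ≤ (n : ℝ) ^ 2 / 4 := by
    have := mid_bound V hV ((L.filter fun l => ¬ w l < 2 * d).filter fun l => w l ≤ T) d T (by norm_num [hdd])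
      (fun l hl => by
        have := (Finset.mem_filter.1 (Finset.mem_filter.1 hl).1).2
        simp only [hw] at this
        omega)
      (fun l hl => (Finset.mem_filter.1 hl).2)
    refine (Finset.sum_le_sum fun l _ => hF2 l).trans (this.trans ?_)
    rw [hcardV]
    have hdR : (d : ℝ) = 1000000 := by rw [hdd]; norm_num
    rw [hdR]
    have : 12 * (2 * (n : ℝ)) * T ≤ 12 * (2 * (n : ℝ)) * (n / 2000000) := by gcongr
    have : 0 ≤ (n : ℝ) ^ 2 := by positivity
    nlinarith
  by_contra hc
  push Not at hc
  have lowb2 : ∑ l ∈ L with w l < 2 * d, F l < (n : ℝ) ^ 2 / 4 := by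
    refine lowb.trans_lt ?_
    have hn2 : 0 < (n : ℝ) ^ 2 := by positivity
    have h1 : (1 / (2 * HH)) ^ 2 / 100 * 4000000000000 ≤ 1 / 4 := by
      unfold HH; norm_num
    nlinarith
  set K := (L.filter fun l => ¬ w l < 2 * d).filter fun l => ¬ w l ≤ T with hK
  have heavy : (n : ℝ) ^ 2 / 2 < ∑ l ∈ K, F l := by
    have hp2 : (n : ℝ) ^ 2 ≤ ∑ l ∈ L, F l := hpairs
    have key : ∀ a b c s r N : ℝ, a + r = s → b + c = r → N ≤ s → a < N / 4 → b ≤ N / 4 →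
        N / 2 < c := by
      intros; linarith
    exact key _ _ _ _ _ _ sp1 sp2 hp2 lowb2 midb
  have hKc : (K.card : ℝ) ≤ HH := by
    have hHn : (4000000 : ℝ) ≤ n := le_trans (by unfold HH; norm_num) hbig
    have := rich V hV K (n / 2000000) (by linarith) (fun l hl => by
      have h1 : T < w l := not_le.1 (Finset.mem_filter.1 hl).2
      have h2 : n < w l * 2000000 := (Nat.div_lt_iff_lt_mul (by norm_num)).1 h1
      have h3 : (n : ℝ) < w l * 2000000 := by exact_mod_cast h2
      simp only [hw] at h3
      linarith)
    refine this.trans ?_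
    rw [hcardV]
    have e : 2304 * (2 * (n : ℝ)) ^ 2 / (n / 2000000) ^ 3 + 12 * (2 * (n : ℝ)) / (n / 2000000)
      = 9216 * 2000000 ^ 3 / n + 24 * 2000000 := by field_simp; ring
    rw [e]
    unfold HH
    gcongr
    exact div_le_self (by norm_num) hn1
  have hex : ∃ l ∈ K, (n : ℝ) ^ 2 / (2 * HH) ≤ F l := by
    by_contra hno
    push Not at hno
    have h1 : ∑ l ∈ K, F l ≤ ∑ l ∈ K, (n : ℝ) ^ 2 / (2 * HH) :=
      Finset.sum_le_sum fun l hl => (hno l hl).le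
    rw [Finset.sum_const, nsmul_eq_mul] at h1
    have h2 : (K.card : ℝ) * ((n : ℝ) ^ 2 / (2 * HH)) ≤ HH * ((n : ℝ) ^ 2 / (2 * HH)) := by gcongr
    have h3 : HH * ((n : ℝ) ^ 2 / (2 * HH)) = (n : ℝ) ^ 2 / 2 := by field_simp
    linarith
  obtain ⟨l0, -, hl0⟩ := hex
  set δ : ℝ := 1 / (2 * HH) with hδ
  have hδ0 : 0 < δ := by positivity
  have hδ1 : δ ≤ 1 := by rw [hδ]; unfold HH; norm_num
  have hδ6 : 6 ≤ δ * n := by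
    have : δ * (12 * HH) = 6 := by rw [hδ]; field_simp; norm_num
    nlinarith
  have hn0 : (0 : ℝ) < n := by linarith
  have e0 : (n : ℝ) ^ 2 / (2 * HH) = (δ * n) * n := by rw [hδ]; field_simp
  rw [e0] at hl0
  have rle : ((pts P l0).card : ℝ) ≤ n := by
    have : (pts P l0).card ≤ n := hP ▸ Finset.card_filter_le _ _
    exact_mod_cast this
  have ble : ((pts Q l0).card : ℝ) ≤ n := by
    have : (pts Q l0).card ≤ n := hQ ▸ Finset.card_filter_le _ _
    exact_mod_cast this
  have rge : δ * n ≤ (pts P l0).card := by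
    have h0 : (0 : ℝ) ≤ (pts P l0).card := Nat.cast_nonneg _
    have : (δ * n) * n ≤ (pts P l0).card * n := hl0.trans (by simp only [hF]; gcongr)
    exact le_of_mul_le_mul_right this hn0
  have bge : δ * n ≤ (pts Q l0).card := by
    have h0 : (0 : ℝ) ≤ (pts Q l0).card := Nat.cast_nonneg _
    have : (δ * n) * n ≤ (pts Q l0).card * n := hl0.trans (by
      simp only [hF]; rw [mul_comm]; gcongr)
    exact le_of_mul_le_mul_right this hn0
  have hout : ((pts P l0).card : ℝ) + (pts Q l0).card ≤ n := by
    have := (hsum l0).le.trans (hr l0)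
    exact_mod_cast this
  have cP : ((pts P l0).card : ℝ) + (P.filter fun p => ¬ p.2 = ht l0 p.1).card = n := by
    have : (pts P l0).card + (P.filter fun p => ¬ p.2 = ht l0 p.1).card = P.card :=
      Finset.card_filter_add_card_filter_not _
    rw [hP] at this
    exact_mod_cast this
  have cQ : ((pts Q l0).card : ℝ) + (Q.filter fun p => ¬ p.2 = ht l0 p.1).card = n := by
    have : (pts Q l0).card + (Q.filter fun p => ¬ p.2 = ht l0 p.1).card = Q.card :=
      Finset.card_filter_add_card_filter_not _
    rw [hQ] at this
    exact_mod_cast this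
  refine absurd hc (not_lt.2 ?_)
  rcases le_total ((pts P l0).card : ℝ) (n / 2) with h | h
  · refine final_case V (P.filter fun p => ¬ p.2 = ht l0 p.1) (pts Q l0) hV
      ((Finset.filter_subset _ _).trans hPV) ((Finset.filter_subset _ _).trans hQV) l0
      (fun q hq => (mem_pts.1 hq).2) (fun p hp => (Finset.mem_filter.1 hp).2) L
      (fun p hp q hq => hL p (Finset.mem_filter.1 hp).1 q (mem_pts.1 hq).1) n δ hn0 hδ0 hδ1
      (by linarith) bge hδ6
  · refine final_case V (Q.filter fun p => ¬ p.2 = ht l0 p.1) (pts P l0) hV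
      ((Finset.filter_subset _ _).trans hQV) ((Finset.filter_subset _ _).trans hPV) l0
      (fun q hq => (mem_pts.1 hq).2) (fun p hp => (Finset.mem_filter.1 hp).2) L
      (fun p hp q hq => ?_) n δ hn0 hδ0 hδ1
      (by linarith) rge hδ6
    obtain ⟨l, hl, h1, h2⟩ := hL q (mem_pts.1 hq).1 p (Finset.mem_filter.1 hp).1
    exact ⟨l, hl, h2, h1⟩

def shear (ε : ℝ) (p : ℝ × ℝ) : ℝ × ℝ := (p.1 + ε * p.2, p.2)

lemma shear_inj (ε : ℝ) : Function.Injective (shear ε) := by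
  intro p q h
  simp only [shear, Prod.mk.injEq] at h
  obtain ⟨h1, h2⟩ := h
  ext
  · rw [h2] at h1; linarith
  · exact h2

lemma exists_shear (V : Finset (ℝ × ℝ)) : ∃ ε, Set.InjOn (fun p => (shear ε p).1) (V : Set (ℝ × ℝ)) := by
  classical
  obtain ⟨ε, hε⟩ := Infinite.exists_notMem_finset
    ((V ×ˢ V).image fun x => -(x.1.1 - x.2.1) / (x.1.2 - x.2.2))
  refine ⟨ε, fun p hp q hq h => ?_⟩
  simp only [shear] at h
  by_cases h2 : p.2 = q.2
  · ext
    · rw [h2] at h; linarith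
    · exact h2
  · exfalso
    apply hε
    refine Finset.mem_image.2 ⟨(p, q), Finset.mem_product.2 ⟨hp, hq⟩, ?_⟩
    have : p.2 - q.2 ≠ 0 := sub_ne_zero.2 h2
    rw [div_eq_iff this]
    simp only
    linarith

def Ln (ε : ℝ) (l : ℝ × ℝ) : Set (ℝ × ℝ) := {p | (shear ε p).2 = ht l (shear ε p).1}

lemma mem_lineThrough {p q x : ℝ × ℝ} : x ∈ lineThrough p q ↔
    ∃ r : ℝ, x.1 = p.1 + r * (q.1 - p.1) ∧ x.2 = p.2 + r * (q.2 - p.2) := by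
  unfold lineThrough
  rw [SetLike.mem_coe, _root_.mem_affineSpan_pair_iff_exists_lineMap_eq]
  refine exists_congr fun r => ?_
  rw [AffineMap.lineMap_apply, Prod.ext_iff]
  simp only [vsub_eq_sub, vadd_eq_add, Prod.fst_add, Prod.snd_add, Prod.smul_fst, Prod.smul_snd,
    Prod.fst_sub, Prod.snd_sub, smul_eq_mul]
  constructor
  · rintro ⟨h1, h2⟩; exact ⟨by linarith, by linarith⟩
  · rintro ⟨h1, h2⟩; exact ⟨by linarith, by linarith⟩

lemma Ln_eq {ε : ℝ} {l p q : ℝ × ℝ} (hp : p ∈ Ln ε l) (hq : q ∈ Ln ε l)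
    (hne : (shear ε p).1 ≠ (shear ε q).1) : Ln ε l = lineThrough p q := by
  ext x
  rw [mem_lineThrough]
  simp only [Ln, shear, ht, Set.mem_ofPred_eq] at *
  have hD : q.1 + ε * q.2 - (p.1 + ε * p.2) ≠ 0 := sub_ne_zero.2 hne.symm
  constructor
  · intro hx
    set D := q.1 + ε * q.2 - (p.1 + ε * p.2) with hDd
    set r := (x.1 + ε * x.2 - (p.1 + ε * p.2)) / D with hr
    have hrD : r * D = x.1 + ε * x.2 - (p.1 + ε * p.2) := by rw [hr]; field_simp
    have h2 : x.2 = p.2 + r * (q.2 - p.2) := by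
      have e : q.2 - p.2 = l.1 * D := by rw [hDd]; linear_combination hq - hp
      rw [e]
      linear_combination hx - hp - l.1 * hrD
    refine ⟨r, ?_, h2⟩
    rw [hDd] at hrD
    linear_combination -hrD - ε * h2
  · rintro ⟨r, h1, h2⟩
    rw [h1, h2]
    linear_combination (1 - r) * hp + r * hq

lemma line_unique {L : Set (ℝ × ℝ)} (hL : IsLine L) {p q : ℝ × ℝ} (hp : p ∈ L) (hq : q ∈ L)
    (hne : p ≠ q) : L = lineThrough p q := by
  obtain ⟨a, b, hab, rfl⟩ := hL
  ext x
  rw [mem_lineThrough] at *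
  obtain ⟨s, s1, s2⟩ := hp
  obtain ⟨t, t1, t2⟩ := hq
  have hst : t - s ≠ 0 := by
    intro h
    have : t = s := by linarith
    apply hne
    ext
    · rw [s1, t1, this]
    · rw [s2, t2, this]
  rw [mem_lineThrough]
  constructor
  · rintro ⟨r, r1, r2⟩
    have hk : (r - s) / (t - s) * (t - s) = r - s := by field_simp
    refine ⟨(r - s) / (t - s), ?_, ?_⟩
    · rw [s1, t1, r1]; linear_combination -(b.1 - a.1) * hk
    · rw [s2, t2, r2]; linear_combination -(b.2 - a.2) * hk
  · rintro ⟨r, r1, r2⟩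
    refine ⟨s + r * (t - s), ?_, ?_⟩
    · rw [r1, s1, t1]; ring
    · rw [r2, s2, t2]; ring

lemma exists_line {p q : ℝ × ℝ} (hne : p.1 ≠ q.1) : ∃ l, p.2 = ht l p.1 ∧ q.2 = ht l q.1 := by
  have h : q.1 - p.1 ≠ 0 := sub_ne_zero.2 hne.symm
  refine ⟨((q.2 - p.2) / (q.1 - p.1), p.2 - (q.2 - p.2) / (q.1 - p.1) * p.1), ?_, ?_⟩
  · simp [ht]
  · simp only [ht]; field_simp; ring

/-- If every line contains at most `n` points of `P ∪ Q` with `|P| = |Q| = n`,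
then there are at least `C · n²` bichromatic induced lines. -/
theorem bichromatic_beck_quadratic :
    ∃ C : ℝ, 0 < C ∧ ∀ (P Q : Finset (ℝ × ℝ)) (n : ℕ),
      Disjoint P Q → P.card = n → Q.card = n →
      (∀ L : Set (ℝ × ℝ), IsLine L → richness (P ∪ Q) L ≤ n) →
      C * (n : ℝ) ^ 2 ≤ ((BichromLines P Q).ncard : ℝ) := by
  have hH : 0 < HH := by unfold HH; norm_num
  refine ⟨(1 / (2 * HH)) ^ 2 / 100, by positivity, ?_⟩
  classical
  intro P Q n hd hP hQ hr
  obtain ⟨ε, hε⟩ := exists_shear (P ∪ Q)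
  have hSV : Set.InjOn Prod.fst (((P ∪ Q).image (shear ε) : Finset (ℝ × ℝ)) : Set (ℝ × ℝ)) := by
    intro x hx y hy h
    simp only [Finset.coe_image, Set.mem_image, Finset.mem_coe] at hx hy
    obtain ⟨p, hp, rfl⟩ := hx
    obtain ⟨q, hq, rfl⟩ := hy
    rw [hε hp hq h]
  have hne : ∀ p ∈ P, ∀ q ∈ Q, p ≠ q := fun p hp q hq h =>
    Finset.disjoint_left.1 hd hp (h ▸ hq)
  have hne1 : ∀ p ∈ P, ∀ q ∈ Q, (shear ε p).1 ≠ (shear ε q).1 := fun p hp q hq h =>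
    hne p hp q hq (hε (by simp [hp]) (by simp [hq]) h)
  have hl : ∀ p q, ∃ l, p ∈ P → q ∈ Q → p ∈ Ln ε l ∧ q ∈ Ln ε l := by
    intro p q
    by_cases h : p ∈ P ∧ q ∈ Q
    · obtain ⟨l, h1, h2⟩ := exists_line (hne1 p h.1 q h.2)
      exact ⟨l, fun _ _ => ⟨h1, h2⟩⟩
    · exact ⟨0, fun h1 h2 => absurd ⟨h1, h2⟩ h⟩
  choose f hf using hl
  set L := (P ×ˢ Q).image fun x => f x.1 x.2 with hLd
  have hcomb := comb (P.image (shear ε)) (Q.image (shear ε)) n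
    ((Finset.disjoint_image (shear_inj ε)).2 hd)
    (by rw [Finset.card_image_of_injective _ (shear_inj ε), hP])
    (by rw [Finset.card_image_of_injective _ (shear_inj ε), hQ])
    ((P ∪ Q).image (shear ε)) (Finset.image_union _ _) hSV
    (by
      intro l
      by_cases h1 : (pts ((P ∪ Q).image (shear ε)) l).card ≤ 1
      · rcases Nat.eq_zero_or_pos n with h0 | hn
        · have hP0 : P = ∅ := Finset.card_eq_zero.1 (hP.trans h0)
          have hQ0 : Q = ∅ := Finset.card_eq_zero.1 (hQ.trans h0)
          simp [hP0, hQ0, pts]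
        · omega
      · push Not at h1
        obtain ⟨x, hx, y, hy, hxy⟩ := Finset.one_lt_card.1 h1
        rw [mem_pts, Finset.mem_image] at hx hy
        obtain ⟨⟨p, hp, rfl⟩, hx⟩ := hx
        obtain ⟨⟨q, hq, rfl⟩, hy⟩ := hy
        have hpq : p ≠ q := fun h => hxy (by rw [h])
        have hline : IsLine (Ln ε l) := ⟨p, q, hpq, Ln_eq hx hy fun h => hpq (hε hp hq h)⟩
        refine le_trans ?_ (hr _ hline)
        unfold richness
        have : ((P ∪ Q : Finset (ℝ × ℝ)) : Set (ℝ × ℝ)) ∩ Ln ε l =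
            (((P ∪ Q).filter fun p => p ∈ Ln ε l : Finset (ℝ × ℝ)) : Set (ℝ × ℝ)) := by
          ext z; simp
        rw [this, Set.ncard_coe_finset,
          ← Finset.card_image_of_injective (Finset.filter _ _) (shear_inj ε)]
        apply Finset.card_le_card
        intro z hz
        rw [mem_pts, Finset.mem_image] at hz
        obtain ⟨⟨u, hu, rfl⟩, hz⟩ := hz
        exact Finset.mem_image_of_mem _ (Finset.mem_filter.2 ⟨hu, hz⟩))
    L
    (by
      intro x hx y hy
      obtain ⟨p, hp, rfl⟩ := Finset.mem_image.1 hx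
      obtain ⟨q, hq, rfl⟩ := Finset.mem_image.1 hy
      exact ⟨f p q, Finset.mem_image.2 ⟨(p, q), Finset.mem_product.2 ⟨hp, hq⟩, rfl⟩, hf p q hp hq⟩)
  refine hcomb.trans ?_
  have hfin : (BichromLines P Q).Finite := by
    refine Set.Finite.subset ((P ×ˢ Q).image fun x => lineThrough x.1 x.2).finite_toSet ?_
    rintro M ⟨hM, ⟨p, hp, hpM⟩, q, hq, hqM⟩
    rw [Finset.mem_coe, Finset.mem_image]
    exact ⟨(p, q), Finset.mem_product.2 ⟨hp, hq⟩, (line_unique hM hpM hqM (hne p hp q hq)).symm⟩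
  have : L.card ≤ (BichromLines P Q).ncard := by
    rw [← Set.ncard_coe_finset]
    refine Set.ncard_le_ncard_of_injOn (Ln ε) ?_ ?_ hfin
    · intro l hl
      obtain ⟨⟨p, q⟩, hpq, rfl⟩ := Finset.mem_image.1 hl
      obtain ⟨hp, hq⟩ := Finset.mem_product.1 hpq
      obtain ⟨h1, h2⟩ := hf p q hp hq
      exact ⟨⟨p, q, hne p hp q hq, Ln_eq h1 h2 (hne1 p hp q hq)⟩, ⟨p, hp, h1⟩, q, hq, h2⟩
    · intro l hl k hk hlk
      obtain ⟨⟨p, q⟩, hpq, rfl⟩ := Finset.mem_image.1 hl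
      obtain ⟨hp, hq⟩ := Finset.mem_product.1 hpq
      obtain ⟨h1, h2⟩ := hf p q hp hq
      have h3 : p ∈ Ln ε k := hlk ▸ h1
      have h4 : q ∈ Ln ε k := hlk ▸ h2
      exact line_eq (hne1 p hp q hq) (Eq.trans (Eq.symm h1) h3) (Eq.trans (Eq.symm h2) h4)
  exact_mod_cast this
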